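/- For every natural number l with l > 1, one has K 0 l = 0. -/

import Mathlib

/-- The Bernoulli–Euler (zigzag, up-down) numbers: `A 0 = 1`, `A 1 = 1`, and
`2 * A (n+1) = ∑ k in range (n+1), (n.choose k) * A k * A (n-k)`. -/
def A : ℕ → ℕ
  | 0 => 1
  | 1 => 1
  | n + 2 =>
      (∑ k ∈ (Finset.range (n + 2)).attach,
        Nat.choose (n + 1) k.1 * A k.1 * A (n + 1 - k.1)) / 2
decreasing_by
  · have := Finset.mem_range.mp k.2; omega
  · have := Finset.mem_range.mp k.2; omega

/-- `K n l` : number of connected components of the space of very nice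
M-morsifications of the multiboundary singularity `B_n^l`, extended by the
recurrence `K n (l+1) = K (n+2) l − (n+2)·l·K (n+2) (l−1)` for `l ≥ 1`,
with `K n 0 = A (n-1)` for `n ≥ 1`, `K n 0 = 0` for `n ≤ 0`,
and `K n 1 = K (n+2) 0`. -/
def K : ℤ → ℕ → ℤ
  | n, 0 => if 1 ≤ n then (A (n - 1).toNat : ℤ) else 0
  | n, 1 => K (n + 2) 0
  | n, (l + 2) => K (n + 2) (l + 1) - (n + 2) * (l + 1) * K (n + 2) l

/-!
The derivatives of the tangent are `tan⁽ⁿ⁾ = Pₙ(tan)` with `P₀ = X`, `Pₙ₊₁ = (1 + X²) Pₙ'`, and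
`A n = (sec + tan)⁽ⁿ⁾(0)`; since `sec` is even, `A n = Pₙ(0)` for odd `n`. Differentiating
`Pₖ / (1 + X²) ^ (i + 1)` reproduces the recurrence of `K` in the even rows, so that `K (2 i) l` is
the `l`-th derivative at `0` of `P_{2i+l-1} / (1 + X²) ^ (i + 1)`. In the row `i = 0` the
denominator cancels and leaves the polynomial `P_{l-2}'`, whose degree is less than `l`.
-/

open PowerSeries
open scoped Nat Polynomial

namespace BernoulliEuler

theorem even_sum_choose_mul_mul (a : ℕ → ℕ) {n : ℕ} (hn : n ≠ 0) :
    Even (∑ k ∈ Finset.range (n + 1), n.choose k * a k * a (n - k)) := by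
  rw [← ZMod.natCast_eq_zero_iff_even, Nat.cast_sum]
  refine Finset.sum_involution (fun k _ ↦ n - k) (fun k hk ↦ ?_) (fun k _ hk_ne hk_fixed ↦ ?_)
    (fun k _ ↦ Finset.mem_range.mpr (by omega)) (fun k hk ↦ ?_)
  · have hkn : k ≤ n := Finset.mem_range_succ_iff.mp hk
    have hterm : n.choose (n - k) * a (n - k) * a (n - (n - k)) = n.choose k * a k * a (n - k) := by
      rw [Nat.choose_symm hkn, Nat.sub_sub_self hkn, mul_right_comm]
    rw [hterm, CharTwo.add_self_eq_zero]
  · obtain rfl : n = 2 * k := by omega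
    refine hk_ne ((ZMod.natCast_eq_zero_iff_even).mpr ?_)
    have hchoose : Even ((2 * k).choose k) :=
      even_iff_two_dvd.mpr (Nat.two_dvd_centralBinom_of_one_le (by omega))
    exact (hchoose.mul_right _).mul_right _
  · exact Nat.sub_sub_self (Finset.mem_range_succ_iff.mp hk)

theorem two_mul_A_add_two (n : ℕ) :
    2 * A (n + 2) =
      ∑ k ∈ Finset.range (n + 2), (n + 1).choose k * A k * A (n + 1 - k) := by
  rw [A, Finset.sum_attach (Finset.range (n + 2))
    (fun k ↦ (n + 1).choose k * A k * A (n + 1 - k))]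
  exact Nat.two_mul_div_two_of_even (even_sum_choose_mul_mul A n.succ_ne_zero)

section EgfCoeff

variable {R : Type*} [CommSemiring R]

/-- The `n`-th coefficient of a power series regarded as an exponential generating function, that
is, its `n`-th derivative at `0`. -/
noncomputable def egfCoeff (n : ℕ) : R⟦X⟧ →ₗ[R] R :=
  (n ! : R) • coeff n

theorem egfCoeff_apply (n : ℕ) (f : R⟦X⟧) : egfCoeff n f = n ! * coeff n f := rfl

theorem egfCoeff_zero (f : R⟦X⟧) : egfCoeff 0 f = constantCoeff f := by
  simp [egfCoeff_apply]

theorem egfCoeff_succ (n : ℕ) (f : R⟦X⟧) : egfCoeff (n + 1) f = egfCoeff n (d⁄dX R f) := by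
  simp only [egfCoeff_apply, coeff_derivative, Nat.factorial_succ]
  push_cast
  ring

theorem egfCoeff_X_mul (n : ℕ) (f : R⟦X⟧) :
    egfCoeff (n + 1) (X * f) = (n + 1) * egfCoeff n f := by
  simp only [egfCoeff_apply, coeff_succ_X_mul, Nat.factorial_succ]
  push_cast
  ring

theorem egfCoeff_mul (n : ℕ) (f g : R⟦X⟧) :
    egfCoeff n (f * g) =
      ∑ k ∈ Finset.range (n + 1), n.choose k * egfCoeff k f * egfCoeff (n - k) g := by
  simp only [egfCoeff_apply]
  rw [coeff_mul, Finset.Nat.sum_antidiagonal_eq_sum_range_succ_mk, Finset.mul_sum]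
  refine Finset.sum_congr rfl fun k hk ↦ ?_
  rw [← Nat.choose_mul_factorial_mul_factorial (Finset.mem_range_succ_iff.mp hk)]
  push_cast
  ring

end EgfCoeff

section Trigonometric

variable (R : Type*) [CommRing R] [Algebra ℚ R]

theorem derivative_sin : d⁄dX R (sin R) = cos R := by
  ext n
  rcases Nat.even_or_odd n with hn | hn
  · have hfac : ((-1) ^ ((n + 1) / 2) / (n + 1)! * (n + 1) : ℚ) = (-1) ^ (n / 2) / n ! := by
      rw [show (n + 1) / 2 = n / 2 by grind, Nat.factorial_succ]
      push_cast
      field_simp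
    simp [coeff_derivative, sin, cos, hn, ← hfac]
  · simp [coeff_derivative, sin, cos, Nat.not_even_iff_odd.mpr hn, hn.add_one]

theorem derivative_cos : d⁄dX R (cos R) = -sin R := by
  ext n
  rcases Nat.even_or_odd n with hn | hn
  · simp [coeff_derivative, sin, cos, hn, Nat.even_add_one]
  · have hfac : (-(-1) ^ ((n + 1) / 2) / (n + 1)! * (n + 1) : ℚ) = (-1) ^ (n / 2) / n ! := by
      rw [show (n + 1) / 2 = n / 2 + 1 by grind, Nat.factorial_succ]
      push_cast
      field_simp
      ring
    simp [coeff_derivative, sin, cos, Nat.not_even_iff_odd.mpr hn, hn.add_one, ← hfac, neg_div]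

theorem constantCoeff_cos : constantCoeff (cos R) = 1 := by
  simp [cos]

theorem constantCoeff_sin : constantCoeff (sin R) = 0 := by
  simp [sin]

theorem cos_sq_add_sin_sq : cos R ^ 2 + sin R ^ 2 = 1 := by
  have := IsAddTorsionFree.of_module_rat R
  refine derivative.ext ?_ ?_
  · rw [map_add, derivative_pow, derivative_pow, derivative_sin, derivative_cos, derivative_one]
    push_cast
    ring
  · simp [constantCoeff_sin, constantCoeff_cos]

theorem evalNegHom_cos : evalNegHom (cos R) = cos R := by
  ext n
  rcases Nat.even_or_odd n with hn | hn
  · simp [evalNegHom, coeff_rescale, cos, hn]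
  · simp [evalNegHom, coeff_rescale, cos, Nat.not_even_iff_odd.mpr hn]

end Trigonometric

section SecTan

variable (k : Type*) [Field k] [CharZero k]

/-- The power series of the secant. -/
noncomputable def sec : k⟦X⟧ := (cos k)⁻¹

/-- The power series of the tangent. -/
noncomputable def tan : k⟦X⟧ := sin k * sec k

theorem cos_mul_sec : cos k * sec k = 1 :=
  PowerSeries.mul_inv_cancel _ (by simp [constantCoeff_cos])

theorem constantCoeff_sec : constantCoeff (sec k) = 1 := by
  simp [sec, constantCoeff_cos]

theorem constantCoeff_tan : constantCoeff (tan k) = 0 := by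
  simp [tan, constantCoeff_sin]

theorem derivative_sec : d⁄dX k (sec k) = sec k * tan k := by
  rw [sec, derivative_inv', derivative_cos, tan, sec]
  ring

theorem derivative_tan : d⁄dX k (tan k) = 1 + tan k ^ 2 := by
  rw [tan, Derivation.leibniz, derivative_sec, derivative_sin, smul_eq_mul, smul_eq_mul, tan]
  linear_combination cos_mul_sec k

theorem sec_sq : sec k ^ 2 = 1 + tan k ^ 2 := by
  rw [tan]
  linear_combination (cos k * sec k + 1) * cos_mul_sec k - sec k ^ 2 * cos_sq_add_sin_sq k

theorem two_mul_derivative_sec_add_tan :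
    2 * d⁄dX k (sec k + tan k) = 1 + (sec k + tan k) * (sec k + tan k) := by
  rw [map_add, derivative_sec, derivative_tan]
  linear_combination -sec_sq k

theorem evalNegHom_sec : evalNegHom (sec k) = sec k := by
  have hneg : cos k * evalNegHom (sec k) = 1 := by
    rw [← evalNegHom_cos, ← map_mul, cos_mul_sec, map_one]
  linear_combination sec k * hneg - evalNegHom (sec k) * cos_mul_sec k

theorem egfCoeff_sec_of_odd {n : ℕ} (hn : Odd n) : egfCoeff n (sec k) = 0 := by
  have hcoeff : coeff n (sec k) = -coeff n (sec k) := by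
    conv_lhs => rw [← evalNegHom_sec, evalNegHom, coeff_rescale, hn.neg_one_pow, neg_one_mul]
  rw [egfCoeff_apply, self_eq_neg.mp hcoeff, mul_zero]

theorem A_eq_egfCoeff_sec_add_tan (n : ℕ) : (A n : k) = egfCoeff n (sec k + tan k) := by
  induction n using Nat.strong_induction_on with
  | _ n ih =>
    match n with
    | 0 => simp [A, egfCoeff_zero, constantCoeff_sec, constantCoeff_tan]
    | 1 =>
      simp [A, egfCoeff_succ, egfCoeff_zero, derivative_sec, derivative_tan, constantCoeff_sec,
        constantCoeff_tan]
    | n + 2 =>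
      refine mul_left_cancel₀ (two_ne_zero' k) ?_
      calc (2 * A (n + 2) : k)
          = ∑ j ∈ Finset.range (n + 2), ((n + 1).choose j : k) * A j * A (n + 1 - j) := by
            exact_mod_cast congrArg (Nat.cast (R := k)) (two_mul_A_add_two n)
        _ = egfCoeff (n + 1) ((sec k + tan k) * (sec k + tan k)) := by
            rw [egfCoeff_mul]
            refine Finset.sum_congr rfl fun j hj ↦ ?_
            have hj_lt : j < n + 2 := Finset.mem_range.mp hj
            rw [ih j hj_lt, ih (n + 1 - j) (by omega)]
        _ = egfCoeff (n + 1) (2 * d⁄dX k (sec k + tan k)) := by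
            rw [two_mul_derivative_sec_add_tan, map_add, egfCoeff_succ n (1 : k⟦X⟧), derivative_one,
              map_zero, zero_add]
        _ = 2 * egfCoeff (n + 2) (sec k + tan k) := by
            rw [two_mul, map_add, ← egfCoeff_succ, two_mul]

end SecTan

section AutonomousDeriv

variable {R : Type*} [CommSemiring R]

/-- The polynomials expressing the iterated derivatives of a solution of the autonomous equation
`y' = q(y)` in terms of `y`: the `n`-th derivative of `y` is `autonomousDeriv q n` evaluated at
`y`. -/
noncomputable def autonomousDeriv (q : R[X]) : ℕ → R[X]
  | 0 => Polynomial.X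
  | n + 1 => q * Polynomial.derivative (autonomousDeriv q n)

theorem iterate_derivation_eq_aeval {S : Type*} [CommSemiring S] [Algebra R S]
    (D : Derivation R S S) {q : R[X]} {y : S} (hy : D y = Polynomial.aeval y q) (n : ℕ) :
    D^[n] y = Polynomial.aeval y (autonomousDeriv q n) := by
  induction n with
  | zero => simp [autonomousDeriv]
  | succ n ih =>
    rw [Function.iterate_succ_apply', ih, Derivation.map_aeval, hy, autonomousDeriv, map_mul,
      smul_eq_mul, mul_comm]

theorem natDegree_autonomousDeriv_le {q : R[X]} {d : ℕ} (hq : q.natDegree ≤ d + 1) (n : ℕ) :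
    (autonomousDeriv q n).natDegree ≤ n * d + 1 := by
  induction n with
  | zero => simpa [autonomousDeriv] using Polynomial.natDegree_X_le
  | succ n ih =>
    rw [autonomousDeriv]
    refine Polynomial.natDegree_mul_le.trans ?_
    have hderiv := Polynomial.natDegree_derivative_le (autonomousDeriv q n)
    rw [Nat.succ_mul]
    omega

end AutonomousDeriv

/-- The polynomials `Pₙ` with `tan⁽ⁿ⁾ = Pₙ(tan)`. -/
noncomputable def tanDeriv : ℕ → ℚ[X] :=
  autonomousDeriv (1 + Polynomial.X ^ 2)

theorem coe_tanDeriv_succ (k : ℕ) :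
    (tanDeriv (k + 1) : ℚ⟦X⟧) = (1 + X ^ 2) * d⁄dX ℚ (tanDeriv k : ℚ⟦X⟧) := by
  simp [tanDeriv, autonomousDeriv, derivative_coe]

theorem iterate_derivative_tan (n : ℕ) :
    (d⁄dX ℚ)^[n] (tan ℚ) = Polynomial.aeval (tan ℚ) (tanDeriv n) :=
  iterate_derivation_eq_aeval _ (by simp [derivative_tan]) n

theorem A_eq_coeff_zero_tanDeriv_of_odd {n : ℕ} (hn : Odd n) :
    (A n : ℚ) = (tanDeriv n).coeff 0 := by
  rw [A_eq_egfCoeff_sec_add_tan ℚ, map_add, egfCoeff_sec_of_odd ℚ hn, zero_add, egfCoeff_apply,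
    ← constantCoeff_iterate_derivative, iterate_derivative_tan,
    Polynomial.coeff_zero_eq_aeval_zero, ← constantCoeff_tan ℚ]
  exact (Polynomial.aeval_algHom_apply constantCoeff.toRatAlgHom (tan ℚ) (tanDeriv n)).symm

theorem one_add_X_sq_mul_inv (k : Type*) [Field k] :
    (1 + X ^ 2 : k⟦X⟧) * (1 + X ^ 2)⁻¹ = 1 :=
  PowerSeries.mul_inv_cancel _ (by simp)

theorem derivative_inv_one_add_X_sq (k : Type*) [Field k] :
    d⁄dX k ((1 + X ^ 2 : k⟦X⟧)⁻¹) = -2 * X * (1 + X ^ 2)⁻¹ ^ 2 := by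
  rw [derivative_inv', map_add, derivative_one, derivative_pow, derivative_X]
  push_cast
  ring

/-- The power series of the rational function `Pₖ / (1 + X²) ^ (i + 1)`, whose derivatives at
`0` give the entries of the even rows of `K`. -/
noncomputable def rowSeries (i k : ℕ) : ℚ⟦X⟧ :=
  (1 + X ^ 2)⁻¹ ^ (i + 1) * (tanDeriv k : ℚ⟦X⟧)

theorem derivative_rowSeries (i k : ℕ) :
    d⁄dX ℚ (rowSeries i k) =
      rowSeries (i + 1) (k + 1) - (2 * i + 2 : ℚ) • (X * rowSeries (i + 1) k) := by
  simp only [rowSeries, Derivation.leibniz, derivative_pow, derivative_inv_one_add_X_sq,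
    coe_tanDeriv_succ, smul_eq_mul, smul_eq_C_mul, map_add, map_mul, map_natCast,
    map_ofNat, Nat.add_sub_cancel]
  push_cast
  linear_combination -(1 + X ^ 2)⁻¹ ^ (i + 1) * d⁄dX ℚ (tanDeriv k : ℚ⟦X⟧) *
    one_add_X_sq_mul_inv ℚ

theorem egfCoeff_one_rowSeries (i k : ℕ) :
    egfCoeff 1 (rowSeries i k) = egfCoeff 0 (rowSeries (i + 1) (k + 1)) := by
  simp [egfCoeff_succ, derivative_rowSeries, egfCoeff_zero]

theorem egfCoeff_add_two_rowSeries (i k l : ℕ) :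
    egfCoeff (l + 2) (rowSeries i k) =
      egfCoeff (l + 1) (rowSeries (i + 1) (k + 1)) -
        (2 * i + 2) * (l + 1) * egfCoeff l (rowSeries (i + 1) k) := by
  rw [egfCoeff_succ, derivative_rowSeries, map_sub, map_smul, egfCoeff_X_mul, smul_eq_mul,
    mul_assoc]

theorem egfCoeff_zero_rowSeries (i k : ℕ) :
    egfCoeff 0 (rowSeries i k) = (tanDeriv k).coeff 0 := by
  simp [egfCoeff_zero, rowSeries]

theorem K_even_row_zero (i : ℕ) :
    (K (2 * (i + 1 : ℕ)) 0 : ℚ) = egfCoeff 0 (rowSeries (i + 1) (2 * i + 1)) := by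
  have hindex : (2 * ((i + 1 : ℕ) : ℤ) - 1).toNat = 2 * i + 1 := by omega
  rw [K, if_pos (by omega), hindex, Int.cast_natCast, egfCoeff_zero_rowSeries,
    A_eq_coeff_zero_tanDeriv_of_odd (odd_two_mul_add_one i)]

/-- For `i = l = 0` the truncated index is `0`, and both sides vanish because `P₀ = X`. -/
theorem K_even_row (i l : ℕ) :
    (K (2 * i) l : ℚ) = egfCoeff l (rowSeries i (2 * i + l - 1)) := by
  have hrow (i : ℕ) : (2 * i + 2 : ℤ) = 2 * (i + 1 : ℕ) := by push_cast; ring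
  induction l using Nat.twoStepInduction generalizing i with
  | zero =>
    rcases i with _ | i
    · simp [K, egfCoeff_zero_rowSeries, tanDeriv, autonomousDeriv]
    · exact K_even_row_zero i
  | one => rw [K, hrow, K_even_row_zero, egfCoeff_one_rowSeries, Nat.add_sub_cancel]
  | more l ih_l ih_succ =>
    have hindex : 2 * (i + 1) + (l + 1) - 1 = 2 * i + (l + 2) - 1 + 1 := by omega
    have hindex' : 2 * (i + 1) + l - 1 = 2 * i + (l + 2) - 1 := by omega
    rw [K, egfCoeff_add_two_rowSeries, hrow, Int.cast_sub, Int.cast_mul, ih_succ, ih_l, hindex,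
      hindex']
    push_cast
    ring

theorem rowSeries_zero_succ (k : ℕ) :
    rowSeries 0 (k + 1) = (Polynomial.derivative (tanDeriv k) : ℚ[X]) := by
  rw [rowSeries, coe_tanDeriv_succ, zero_add, pow_one, ← derivative_coe]
  linear_combination d⁄dX ℚ (tanDeriv k : ℚ⟦X⟧) * one_add_X_sq_mul_inv ℚ

theorem coeff_derivative_tanDeriv_eq_zero {k l : ℕ} (hkl : k < l) :
    (Polynomial.derivative (tanDeriv k)).coeff l = 0 := by
  have hdeg : (tanDeriv k).natDegree ≤ k * 1 + 1 :=
    natDegree_autonomousDeriv_le (by compute_degree) k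
  rw [Polynomial.coeff_derivative, Polynomial.coeff_eq_zero_of_natDegree_lt (by omega), zero_mul]

end BernoulliEuler

open BernoulliEuler

/-- For `l > 1`, `K 0 l = 0`. -/
theorem K_zero_row (l : ℕ) (hl : 1 < l) : K 0 l = 0 := by
  obtain ⟨m, rfl⟩ : ∃ m, l = m + 2 := Nat.exists_eq_add_of_le' hl
  have hK : (K 0 (m + 2) : ℚ) = 0 := calc
    (K 0 (m + 2) : ℚ) = egfCoeff (m + 2) (rowSeries 0 (m + 1)) := by
      simpa using K_even_row 0 (m + 2)
    _ = (m + 2)! * (Polynomial.derivative (tanDeriv m)).coeff (m + 2) := by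
      rw [rowSeries_zero_succ, egfCoeff_apply, Polynomial.coeff_coe]
    _ = 0 := by rw [coeff_derivative_tanDeriv_eq_zero (by omega), mul_zero]
  exact_mod_cast hK
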